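/- Let C > 0, let Q : [0,∞) → ℝ be nonincreasing, and for each t > 0 let v⁺_t be a finite nonnegative Borel measure on ℝ such that for every s with 0 ≤ s < t and every Borel set B ⊆ ℝ one has v⁺_t(B) ≤ C·( L¹(B)/(t−s) + Q(s) − Q(t) ). Then the set of times t ∈ (0,∞) at which v⁺_t is not absolutely continuous with respect to Lebesgue measure is at most countable. -/

import Mathlib

open MeasureTheory

/-!
Only the term `Q s - Q t` of the estimate survives on a null set, and it tends to `0` as `s ↑ t`
whenever `Q` is left-continuous at `t`. Hence the singular times lie among the discontinuities of a
monotone function, of which there are countably many. For a general set of times one also has to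
discard the times that are not limits of earlier ones; these are countably many too.
-/

open Filter Set Topology
open scoped ENNReal NNReal

section AbsolutelyContinuous

variable {α : Type*} [MeasurableSpace α] {μ ν : Measure α}

theorem absolutelyContinuous_of_eventually_le_mul_add {ι : Type*} {l : Filter ι} [l.NeBot]
    {K ε : ι → ℝ≥0∞} (hε : Tendsto ε l (𝓝 0))
    (hle : ∀ᶠ i in l, ∀ B, MeasurableSet B → ν B ≤ K i * μ B + ε i) : ν ≪ μ := by
  refine Measure.AbsolutelyContinuous.mk fun B hB hμB => ?_
  have hνB : ∀ᶠ i in l, ν B ≤ ε i := by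
    filter_upwards [hle] with i hi
    simpa only [hμB, mul_zero, zero_add] using hi B hB
  exact nonpos_iff_eq_zero.mp (ge_of_tendsto hε hνB)

theorem absolutelyContinuous_of_decay_of_continuousWithinAt {C : ℝ≥0} {Q : ℝ → ℝ} {T : Set ℝ}
    {t : ℝ} [(𝓝[T ∩ Iio t] t).NeBot] (hQ : ContinuousWithinAt Q (T ∩ Iio t) t)
    (hdecay : ∀ s ∈ T, s < t → ∀ B, MeasurableSet B →
      ν B ≤ C * (μ B / ENNReal.ofReal (t - s) + ENNReal.ofReal (Q s - Q t))) :
    ν ≪ μ := by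
  have hdrop : Tendsto (fun s => C * ENNReal.ofReal (Q s - Q t)) (𝓝[T ∩ Iio t] t) (𝓝 0) := by
    have h := ENNReal.Tendsto.const_mul (ENNReal.tendsto_ofReal (hQ.tendsto.sub_const (Q t)))
      (Or.inr (ENNReal.coe_ne_top (r := C)))
    simpa only [sub_self, ENNReal.ofReal_zero, mul_zero] using h
  refine absolutelyContinuous_of_eventually_le_mul_add
    (K := fun s => C / ENNReal.ofReal (t - s)) hdrop ?_
  filter_upwards [self_mem_nhdsWithin] with s ⟨hsT, hst⟩ B hB
  calc ν B
    _ ≤ C * (μ B / ENNReal.ofReal (t - s) + ENNReal.ofReal (Q s - Q t)) := hdecay s hsT hst B hB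
    _ = C / ENNReal.ofReal (t - s) * μ B + C * ENNReal.ofReal (Q s - Q t) := by
      rw [mul_add, ← mul_div_assoc, ENNReal.mul_div_right_comm]

end AbsolutelyContinuous

theorem countable_nonAC_times_of_positive_wave_decay_general {α : Type*} [MeasurableSpace α]
    {μ : Measure α} {C : ℝ≥0} {Q : ℝ → ℝ} {T : Set ℝ} (hQ : AntitoneOn Q T) {v : ℝ → Measure α}
    (hdecay : ∀ t ∈ T, ∀ s ∈ T, s < t → ∀ B, MeasurableSet B →
      v t B ≤ C * (μ B / ENNReal.ofReal (t - s) + ENNReal.ofReal (Q s - Q t))) :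
    {t ∈ T | ¬ v t ≪ μ}.Countable := by
  have hisolated : {t ∈ T | 𝓝[T ∩ Iio t] t = ⊥}.Countable :=
    countable_setOfPred_isolated_left_within
  have hdiscont : {t ∈ T | ¬ ContinuousWithinAt Q T t}.Countable :=
    hQ.countable_not_continuousWithinAt
  refine (hisolated.union hdiscont).mono fun t ⟨htT, hsing⟩ => or_iff_not_imp_left.mpr ?_
  refine fun hlimit => ⟨htT, fun hcont => hsing ?_⟩
  have : (𝓝[T ∩ Iio t] t).NeBot := ⟨fun hbot => hlimit ⟨htT, hbot⟩⟩
  exact absolutelyContinuous_of_decay_of_continuousWithinAt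
    (hcont.mono inter_subset_left) (hdecay t htT)

/-- **Countably many singular times from the positive-wave decay estimate.**
If `Q` is nonincreasing on `[0,∞)` and the finite measures `v t` (the positive
parts of the wave measures) satisfy
`v t (B) ≤ C (L¹(B)/(t−s) + Q(s) − Q(t))` for all `0 ≤ s < t` and Borel `B`,
then the set of times `t > 0` at which `v t` fails to be absolutely continuous
with respect to Lebesgue measure is at most countable. -/
theorem countable_nonAC_times_of_positive_wave_decay
    (C : ℝ) (hC : 0 < C) (Q : ℝ → ℝ) (hQ : AntitoneOn Q (Set.Ici 0))
    (v : ℝ → Measure ℝ) (hfin : ∀ t : ℝ, 0 < t → IsFiniteMeasure (v t))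
    (hest : ∀ t : ℝ, 0 < t → ∀ s : ℝ, 0 ≤ s → s < t → ∀ B : Set ℝ, MeasurableSet B →
      v t B ≤ ENNReal.ofReal C *
        (volume B / ENNReal.ofReal (t - s) + ENNReal.ofReal (Q s - Q t))) :
    {t : ℝ | 0 < t ∧ ¬ v t ≪ volume}.Countable := by
  refine (countable_nonAC_times_of_positive_wave_decay_general hQ fun t _ s hs hst =>
    hest t (hs.trans_lt hst) s hs hst).mono ?_
  exact fun t ⟨ht, hsing⟩ => ⟨ht.le, hsing⟩
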